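/- Let n ≥ 1, m ∈ ℕ ∪ {0}, 0 < α < n, γ ∈ (0,1], 0 < δ < min{γ, (n−α)/m} (for m = 0 just 0 < δ < γ), α̃ = mδ + α, 1 ≤ r ≤ ∞, and let δ̃ = α̃ − n/r (with n/∞ = 0); assume δ̃ ≤ δ. Let K_α : ℝⁿ∖{0} → ℝ be a measurable kernel satisfying the size condition S*_α and the smoothness condition H*_{α,∞} with exponent γ. Let b ∈ Λ(δ), and let w be a weight such that the pair (w,w) belongs to the class H(r, α̃, δ̃). Then there exists a constant C, independent of f and b, such that for every measurable f with f/w ∈ L^{r}(ℝⁿ) for which the integral T^m_{α,b} f(x) = ∫_{ℝⁿ} (b(x) − b(z))^m K_α(x−z) f(z) dz converges absolutely for almost every x and defines a locally integrable function, one has ‖T^m_{α,b} f‖_{𝕃_w(δ̃/n)} ≤ C · ‖b‖_{Λ(δ)}^m · ‖f/w‖_{r}. -/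

import Mathlib

open MeasureTheory Metric ENNReal NNReal

noncomputable section

/-- Euclidean space `ℝⁿ`. -/
abbrev E (n : ℕ) := EuclideanSpace ℝ (Fin n)

/-- `(∫ f^p dμ)^(1/p)` for finite `p`, and the essential supremum for `p = ∞`. -/
noncomputable def eN {n : ℕ} (p : ℝ≥0∞) (f : E n → ℝ≥0∞) (μ : Measure (E n)) : ℝ≥0∞ :=
  if p = ∞ then essSup f μ else (∫⁻ y, f y ^ p.toReal ∂μ) ^ (1 / p.toReal)

/-- The two-weight class `H(r, αt, δt)` with constant `C`, where `r'` denotes the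
conjugate exponent of `r` (so the `r = 1`, `r' = ∞` case is the essential supremum,
built into `eN`). -/
def Hclass (n : ℕ) (r' : ℝ≥0∞) (αt δ δt : ℝ) (v w : E n → ℝ≥0∞) (C : ℝ≥0∞) : Prop :=
  ∀ (c : E n) (R : ℝ), 0 < R →
    essSup (fun y => (w y)⁻¹) (volume.restrict (ball c R)) *
        volume (ball c R) ^ ((δ - δt) / (n : ℝ)) *
        eN r' (fun y =>
          v y * (volume (ball c R) ^ ((1 : ℝ) / (n : ℝ)) +
            ENNReal.ofReal (dist c y)) ^ (-((n : ℝ) - αt + δ))) volume ≤ C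

/-- The local condition (L) with constant `C`. -/
def LocalCond (n : ℕ) (r r' : ℝ≥0∞) (αt δt : ℝ) (v w : E n → ℝ≥0∞) (C : ℝ≥0∞) : Prop :=
  ∀ (c : E n) (R : ℝ), 0 < R →
    essSup (fun y => (w y)⁻¹) (volume.restrict (ball c R)) *
        volume (ball c R) ^ ((αt - δt) / (n : ℝ) - r⁻¹.toReal) *
        eN r' v ((volume (ball c R))⁻¹ • volume.restrict (ball c R)) ≤ C

/-- The global condition (G) with constant `C`. -/
def GlobalCond (n : ℕ) (r' : ℝ≥0∞) (αt δ δt : ℝ) (v w : E n → ℝ≥0∞) (C : ℝ≥0∞) : Prop :=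
  ∀ (c : E n) (R : ℝ), 0 < R →
    essSup (fun y => (w y)⁻¹) (volume.restrict (ball c R)) *
        volume (ball c R) ^ ((δ - δt) / (n : ℝ)) *
        eN r' (fun y => v y * (ENNReal.ofReal (dist c y)) ^ (-((n : ℝ) - αt + δ)))
          (volume.restrict ((ball c R)ᶜ)) ≤ C

/-- `b ∈ Λ(δ)` with Lipschitz-`δ` constant `Cb`. -/
def LipDelta {n : ℕ} (δ Cb : ℝ) (b : E n → ℝ) : Prop :=
  ∀ x y : E n, |b x - b y| ≤ Cb * dist x y ^ δ

/-- The size condition `S*_α` with constant `A`. -/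
def SizeCond (n : ℕ) (α A : ℝ) (K : E n → ℝ) : Prop :=
  ∀ x : E n, x ≠ 0 → |K x| ≤ A * ‖x‖ ^ (α - (n : ℝ))

/-- The smoothness condition `H*_{α,∞}` with exponent `γ` and constant `A`. -/
def SmoothCond (n : ℕ) (α γ A : ℝ) (K : E n → ℝ) : Prop :=
  ∀ x x' y : E n, 2 * dist x x' ≤ dist x y →
    |K (x - y) - K (x' - y)| + |K (y - x) - K (y - x')| ≤
      A * dist x x' ^ γ / dist x y ^ ((n : ℝ) - α + γ)

/-!
Fix a ball `B = B(c, R)` and put `s = n - αt + δ`, which is positive since `αt < n`.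
The oscillation of `T^m_{α,b} f` on `B` is compared with the single weighted integral

  `J = ∫ |f z| (|B|^(1/n) + |c - z|)^(-s) dz`.

The part of `f` inside `B(c, 5 R)` is handled by the size of the commutator kernel
(`kernel_near_le`) and the integrability of the Riesz kernel over balls (`lintegral_ball_riesz`);
here the weight in `J` is bounded below by a multiple of `R^(-s)`. On the part outside, the constant
`T^m_{α,b}(f χ_{B(c, 5 R)ᶜ})(x₀)` is subtracted for some `x₀ ∈ B`, and the regularity of the kernel
(`kernel_far_le`) gains `R^δ |c - z|^(-s)`; here `|c - z|` is comparable to `|B|^(1/n) + |c - z|`.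
Both parts are at most a constant times `Cb^m R^(n + δ) J` (`exists_osc_bound`).

By Hölder's inequality (`eN_holder`), `J` is at most `‖f / w‖_r` times the `L^{r'}` norm in the
definition of the class `H`. The powers of `|B|` then combine to `|B|^((δ - δt) / n)`, and the
condition `H` for the ball `B` finishes the proof. If `‖w⁻¹ χ_B‖_∞ = 0` the claim is trivial, and
otherwise condition `H` forces the `L^{r'}` norm to be finite, hence `w < ∞` almost everywhere,
which Hölder's inequality needs.
-/

/-! ### The Riesz kernel on balls -/

/-- The Riesz kernel `|x - z|^(a - n)` with `a > 0` integrates to `n |B(0,1)| ρ^a / a` over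
`B(z, ρ)`, by polar coordinates. -/
theorem lintegral_ball_riesz (n : ℕ) (hn : 1 ≤ n) {a : ℝ} (ha : 0 < a) (z : E n) {ρ : ℝ}
    (hρ : 0 < ρ) :
    ∫⁻ x in ball z ρ, ENNReal.ofReal (‖x - z‖ ^ (a - (n : ℝ))) ≤
      ENNReal.ofReal ((n : ℝ) * (volume : Measure (E n)).real (ball 0 1) / a * ρ ^ a) := by
  have : Nonempty (Fin n) := ⟨⟨0, hn⟩⟩
  have hfr : Module.finrank ℝ (E n) = n := by simp
  have hpow : ∀ y : ℝ, 0 < y → y ^ (n - 1) * y ^ (a - (n : ℝ)) = y ^ (a - 1) := by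
    intro y hy
    rw [← Real.rpow_natCast, ← Real.rpow_add hy, Nat.cast_sub hn]
    congr 1; push_cast; ring
  have htrans : ∫⁻ x in ball z ρ, ENNReal.ofReal (‖x - z‖ ^ (a - (n : ℝ))) =
      ∫⁻ x in ball (0 : E n) ρ, ENNReal.ofReal (‖x‖ ^ (a - (n : ℝ))) := by
    rw [← lintegral_indicator measurableSet_ball, ← lintegral_indicator measurableSet_ball,
      ← lintegral_sub_right_eq_self
        (fun x => (ball (0 : E n) ρ).indicator
          (fun x => ENNReal.ofReal (‖x‖ ^ (a - (n : ℝ)))) x) z]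
    refine lintegral_congr fun x => ?_
    simp only [Set.indicator, mem_ball, dist_eq_norm, sub_zero]
  have hint1 : IntegrableOn (fun y : ℝ => y ^ (a - 1)) (Set.Ioo 0 ρ) :=
    (intervalIntegral.integrableOn_Ioo_rpow_iff hρ).2 (by linarith)
  have hint : IntegrableOn (fun x : E n => ‖x‖ ^ (a - (n : ℝ))) (ball 0 ρ) := by
    refine (integrableOn_fun_norm_addHaar (f := fun y : ℝ => y ^ (a - (n : ℝ)))
      (volume : Measure (E n))).2 ?_
    rw [hfr]
    refine hint1.congr_fun (fun y hy => ?_) measurableSet_Ioo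
    simp only [smul_eq_mul]
    exact (hpow y hy.1).symm
  rw [htrans, ← ofReal_integral_eq_lintegral_ofReal hint
    (Filter.Eventually.of_forall fun x => by positivity)]
  refine ENNReal.ofReal_le_ofReal (le_of_eq ?_)
  have h1 : ∫ x in ball (0 : E n) ρ, ‖x‖ ^ (a - (n : ℝ)) =
      ∫ x : E n, (Set.Iio ρ).indicator (fun y : ℝ => y ^ (a - (n : ℝ))) ‖x‖ := by
    rw [← integral_indicator measurableSet_ball]
    refine integral_congr_ae (Filter.Eventually.of_forall fun x => ?_)
    simp [Set.indicator]
  have h2 : ∫ y in Set.Ioi (0 : ℝ), y ^ (n - 1) •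
      (Set.Iio ρ).indicator (fun y : ℝ => y ^ (a - (n : ℝ))) y = ρ ^ a / a := by
    have : ∫ y in Set.Ioi (0 : ℝ), y ^ (n - 1) •
      (Set.Iio ρ).indicator (fun y : ℝ => y ^ (a - (n : ℝ))) y =
        ∫ y in Set.Ioi (0 : ℝ), (Set.Iio ρ).indicator (fun y : ℝ => y ^ (a - 1)) y := by
      refine setIntegral_congr_fun measurableSet_Ioi fun y hy => ?_
      by_cases hyr : y < ρ
      · simp [Set.indicator, hyr, hpow y hy]
      · simp [Set.indicator, hyr]
    rw [this, setIntegral_indicator measurableSet_Iio, Set.Ioi_inter_Iio,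
      ← integral_Ioc_eq_integral_Ioo, ← intervalIntegral.integral_of_le hρ.le,
      integral_rpow (Or.inl (by linarith))]
    simp [Real.zero_rpow ha.ne']
  rw [h1, integral_fun_norm_addHaar, hfr, h2]
  simp only [nsmul_eq_mul, smul_eq_mul]
  ring

/-! ### Hölder's inequality and finiteness for `eN` -/

/-- Hölder's inequality for `eN`, including the endpoint pairs `(1, ∞)` and `(∞, 1)`. -/
theorem eN_holder {n : ℕ} {r r' : ℝ≥0∞} (hr : 1 ≤ r) (hconj : r⁻¹ + r'⁻¹ = 1)
    {g h : E n → ℝ≥0∞} (hg : Measurable g) (hh : Measurable h) :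
    ∫⁻ y, g y * h y ≤ eN r g volume * eN r' h volume := by
  rcases eq_or_ne r ∞ with rfl | hrt
  · have : r' = 1 := by simpa using hconj
    subst this
    simp only [eN, if_true, ENNReal.one_ne_top, if_false, ENNReal.toReal_one, ENNReal.rpow_one,
      div_one]
    rw [← lintegral_const_mul _ hh]
    refine lintegral_mono_ae ?_
    filter_upwards [ENNReal.ae_le_essSup g] with y hy
    gcongr
  rcases eq_or_ne r 1 with rfl | hr1
  · have : r' = ∞ := by
      rw [inv_one] at hconj
      have h0 : r'⁻¹ = 0 := by
        have := ENNReal.add_right_inj (a := 1) (b := r'⁻¹) (c := 0) (by simp)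
        rw [add_zero] at this
        exact this.1 hconj
      simpa using h0
    subst this
    simp only [eN, if_true, ENNReal.one_ne_top, if_false, ENNReal.toReal_one, ENNReal.rpow_one,
      div_one]
    rw [← lintegral_mul_const _ hg]
    refine lintegral_mono_ae ?_
    filter_upwards [ENNReal.ae_le_essSup h] with y hy
    gcongr
  · have hH : ENNReal.HolderConjugate r r' := ⟨by simpa using hconj⟩
    have hrfin : r' ≠ ∞ := by
      rintro rfl
      simp at hconj
      exact hr1 hconj
    have h1 : 1 < r.toReal := by
      rw [← ENNReal.toReal_one]
      exact (ENNReal.toReal_lt_toReal (by simp) hrt).2 (lt_of_le_of_ne hr (Ne.symm hr1))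
    have hR := (ENNReal.HolderConjugate.toReal_iff h1).2 hH
    simp only [eN, hrt, hrfin, if_false]
    exact ENNReal.lintegral_mul_le_Lp_mul_Lq volume hR hg.aemeasurable hh.aemeasurable

theorem ae_lt_top_of_eN {n : ℕ} {p : ℝ≥0∞} (hp : 1 ≤ p) {g : E n → ℝ≥0∞} (hg : Measurable g)
    (hfin : eN p g volume < ∞) : ∀ᵐ y, g y < ∞ := by
  rcases eq_or_ne p ∞ with rfl | hpt
  · simp only [eN, if_true] at hfin
    filter_upwards [ENNReal.ae_le_essSup g] with y hy
    exact hy.trans_lt hfin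
  · have hp0 : 0 < p.toReal := ENNReal.toReal_pos (by positivity) hpt
    simp only [eN, hpt, if_false] at hfin
    have h1 : ∫⁻ y, g y ^ p.toReal ≠ ∞ := by
      intro h
      rw [h, ENNReal.top_rpow_of_pos (by positivity)] at hfin
      exact lt_irrefl _ hfin
    filter_upwards [ae_lt_top (hg.pow_const _) h1] with y hy
    by_contra hc
    simp only [not_lt, top_le_iff] at hc
    rw [hc, ENNReal.top_rpow_of_pos hp0] at hy
    exact lt_irrefl _ hy

/-! ### Size and regularity of the commutator kernel -/

/-- The commutator kernel is dominated by the Riesz kernel of order `αt = m δ + α`: each factor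
`b x - b z` improves the singularity by `δ`. -/
theorem kernel_near_le {n m : ℕ} {α δ αt A₁ Cb : ℝ} (hαt : αt = (m : ℝ) * δ + α)
    {K : E n → ℝ} (hsize : SizeCond n α A₁ K) (hCb : 0 ≤ Cb)
    {b : E n → ℝ} (hb : LipDelta δ Cb b) {x z : E n} (hxz : x ≠ z) :
    |(b x - b z) ^ m * K (x - z)| ≤ Cb ^ m * A₁ * ‖x - z‖ ^ (αt - (n : ℝ)) := by
  have hpos : 0 < ‖x - z‖ := norm_pos_iff.2 (sub_ne_zero.2 hxz)
  have h1 := hb x z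
  have h2 := hsize (x - z) (sub_ne_zero.2 hxz)
  rw [dist_eq_norm] at h1
  rw [abs_mul, abs_pow]
  calc |b x - b z| ^ m * |K (x - z)|
      ≤ (Cb * ‖x - z‖ ^ δ) ^ m * (A₁ * ‖x - z‖ ^ (α - (n : ℝ))) := by gcongr
    _ = Cb ^ m * A₁ * ‖x - z‖ ^ (αt - (n : ℝ)) := by
      rw [mul_pow, ← Real.rpow_mul_natCast hpos.le,
        show αt - (n : ℝ) = δ * m + (α - n) by rw [hαt]; ring, Real.rpow_add hpos]
      ring

/-- Regularity of the commutator kernel away from the ball: for `x, x₀ ∈ B(c, R)` and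
`|c - z| ≥ 5 R` (so that `2 |x - x₀| < 4 R ≤ |x - z|` and the smoothness condition applies), the
kernel varies by at most a constant times `Cb^m R^δ |c - z|^(-(n - αt + δ))`. The variation of `K`
would give the exponent `γ`, which is lowered to `δ < γ`; the variation of `(b · - b z)^m` gives
exactly `δ`. -/
theorem kernel_far_le {n m : ℕ} {α δ αt γ A₁ A₂ Cb : ℝ} (hαn : α < (n : ℝ))
    (hγ0 : 0 < γ) (hδ0 : 0 < δ) (hδγ : δ < γ) (hαt : αt = (m : ℝ) * δ + α)
    (hA₁ : 0 ≤ A₁) (hA₂ : 0 ≤ A₂) {K : E n → ℝ} (hsize : SizeCond n α A₁ K)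
    (hsmooth : SmoothCond n α γ A₂ K) (hCb : 0 ≤ Cb)
    {b : E n → ℝ} (hb : LipDelta δ Cb b) {c x x₀ z : E n} {R : ℝ} (hR : 0 < R)
    (hx : dist x c < R) (hx₀ : dist x₀ c < R) (hz : 5 * R ≤ dist c z) :
    |(b x - b z) ^ m * K (x - z) - (b x₀ - b z) ^ m * K (x₀ - z)| ≤
      ((2 ^ δ) ^ m * A₂ * 2 ^ δ * 2 ^ ((n : ℝ) - α + γ) +
          A₁ * 2 ^ ((n : ℝ) - α) * 2 ^ δ * m * (2 ^ δ) ^ (m - 1)) *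
        Cb ^ m * R ^ δ * dist c z ^ (-((n : ℝ) - αt + δ)) := by
  set D := dist c z with hD
  have hDpos : 0 < D := by linarith
  have hxx₀ : dist x x₀ ≤ 2 * R := by
    have := dist_triangle_right x x₀ c
    linarith
  have hxz1 : D / 2 ≤ dist x z := by
    have := dist_triangle_left c z x
    linarith
  have hxz4 : 2 * dist x x₀ ≤ dist x z := by
    have := dist_triangle_left c z x
    linarith
  have hxz2 : dist x z ≤ 2 * D := by
    have := dist_triangle x c z
    linarith
  have hx₀z1 : D / 2 ≤ dist x₀ z := by
    have := dist_triangle_left c z x₀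
    linarith
  have hx₀z2 : dist x₀ z ≤ 2 * D := by
    have := dist_triangle x₀ c z
    linarith
  have hlip : ∀ y, dist y z ≤ 2 * D → |b y - b z| ≤ Cb * (2 ^ δ * D ^ δ) := by
    intro y hy
    refine (hb y z).trans ?_
    rw [← Real.mul_rpow (by norm_num) hDpos.le]
    gcongr
  have hbx := hlip x hxz2
  have hbx₀ := hlip x₀ hx₀z2
  have hbb : |b x - b x₀| ≤ Cb * (2 ^ δ * R ^ δ) := by
    refine (hb x x₀).trans ?_
    rw [← Real.mul_rpow (by norm_num) hR.le]
    gcongr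
  have hneg : ∀ {t e : ℝ}, D / 2 ≤ t → 0 ≤ e → t ^ (-e) ≤ 2 ^ e * D ^ (-e) := by
    intro t e ht he
    calc t ^ (-e) ≤ (D / 2) ^ (-e) :=
          Real.rpow_le_rpow_of_nonpos (by positivity) ht (by linarith)
      _ = 2 ^ e * D ^ (-e) := by
          rw [Real.div_rpow hDpos.le (by norm_num), Real.rpow_neg (by norm_num : (0:ℝ) ≤ 2)]
          field_simp
  have hK : |K (x - z) - K (x₀ - z)| ≤
      A₂ * (2 ^ δ * R ^ δ * D ^ (γ - δ)) *
        (2 ^ ((n : ℝ) - α + γ) * D ^ (-((n : ℝ) - α + γ))) := by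
    have h1 := hsmooth x x₀ z hxz4
    have h2 := abs_nonneg (K (z - x) - K (z - x₀))
    have h3 : dist x x₀ ^ γ ≤ 2 ^ δ * R ^ δ * D ^ (γ - δ) := by
      calc dist x x₀ ^ γ ≤ (2 * R) ^ γ := by gcongr
        _ = (2 * R) ^ δ * (2 * R) ^ (γ - δ) := by
            rw [← Real.rpow_add (by positivity)]; congr 1; ring
        _ ≤ (2 * R) ^ δ * D ^ (γ - δ) := by
            gcongr
            linarith
        _ = _ := by rw [Real.mul_rpow (by norm_num) hR.le]
    have hxzpos : 0 < dist x z := by linarith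
    calc |K (x - z) - K (x₀ - z)|
        ≤ A₂ * dist x x₀ ^ γ / dist x z ^ ((n : ℝ) - α + γ) := by linarith
      _ = A₂ * dist x x₀ ^ γ * dist x z ^ (-((n : ℝ) - α + γ)) := by
          rw [Real.rpow_neg hxzpos.le]; rfl
      _ ≤ _ := by
          gcongr
          exact hneg hxz1 (by linarith)
  have hK₀ : |K (x₀ - z)| ≤ A₁ * (2 ^ ((n : ℝ) - α) * D ^ (-((n : ℝ) - α))) := by
    have hne : x₀ - z ≠ 0 := by
      rw [sub_ne_zero]
      rintro rfl
      rw [dist_self] at hx₀z1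
      linarith
    refine (hsize _ hne).trans ?_
    rw [← dist_eq_norm, show α - (n : ℝ) = -((n : ℝ) - α) by ring]
    gcongr
    exact hneg hx₀z1 (by linarith)
  have hpow : |(b x - b z) ^ m - (b x₀ - b z) ^ m| ≤
      Cb * (2 ^ δ * R ^ δ) * m * (Cb * (2 ^ δ * D ^ δ)) ^ (m - 1) := by
    refine (abs_pow_sub_pow_le ..).trans ?_
    rw [sub_sub_sub_cancel_right]
    gcongr
    exact max_le hbx hbx₀
  calc |(b x - b z) ^ m * K (x - z) - (b x₀ - b z) ^ m * K (x₀ - z)|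
      = |(b x - b z) ^ m * (K (x - z) - K (x₀ - z)) +
          K (x₀ - z) * ((b x - b z) ^ m - (b x₀ - b z) ^ m)| := by congr 1; ring
    _ ≤ |b x - b z| ^ m * |K (x - z) - K (x₀ - z)| +
          |K (x₀ - z)| * |(b x - b z) ^ m - (b x₀ - b z) ^ m| := by
        refine (abs_add_le _ _).trans ?_
        rw [abs_mul, abs_mul, abs_pow]
    _ ≤ (Cb * (2 ^ δ * D ^ δ)) ^ m * (A₂ * (2 ^ δ * R ^ δ * D ^ (γ - δ)) *
          (2 ^ ((n : ℝ) - α + γ) * D ^ (-((n : ℝ) - α + γ)))) +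
        A₁ * (2 ^ ((n : ℝ) - α) * D ^ (-((n : ℝ) - α))) *
          (Cb * (2 ^ δ * R ^ δ) * m * (Cb * (2 ^ δ * D ^ δ)) ^ (m - 1)) := by
        gcongr
    _ = _ := by
        have e1 : (D ^ δ) ^ m * (D ^ (γ - δ) * D ^ (-((n : ℝ) - α + γ))) =
            D ^ (-((n : ℝ) - αt + δ)) := by
          rw [← Real.rpow_mul_natCast hDpos.le, ← Real.rpow_add hDpos, ← Real.rpow_add hDpos]
          congr 1; rw [hαt]; ring
        have e2 : (m : ℝ) * Cb * Cb ^ (m - 1) * ((D ^ δ) ^ (m - 1) * D ^ (-((n : ℝ) - α))) =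
            m * Cb ^ m * D ^ (-((n : ℝ) - αt + δ)) := by
          rcases m with _ | k
          · simp
          · simp only [Nat.add_sub_cancel]
            rw [← Real.rpow_mul_natCast hDpos.le, ← Real.rpow_add hDpos,
              show -((n : ℝ) - αt + δ) = δ * k + -((n : ℝ) - α) by rw [hαt]; push_cast; ring]
            ring
        rw [mul_pow, mul_pow, mul_pow, mul_pow]
        linear_combination (Cb ^ m * (2 ^ δ) ^ m * A₂ * 2 ^ δ * R ^ δ * 2 ^ ((n : ℝ) - α + γ)) * e1
          + (A₁ * 2 ^ ((n : ℝ) - α) * 2 ^ δ * R ^ δ * (2 ^ δ) ^ (m - 1)) * e2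

/-! ### Oscillation on a ball -/

/-- Subtracting the average is optimal up to a factor `2` among all constants `a`. -/
theorem lintegral_sub_average_le {n : ℕ} {g : E n → ℝ} {c : E n} {R : ℝ} (hR : 0 < R)
    (hg : IntegrableOn g (ball c R)) (a : ℝ) :
    ∫⁻ y in ball c R, ENNReal.ofReal |g y - ⨍ z in ball c R, g z| ≤
      2 * ∫⁻ y in ball c R, ENNReal.ofReal |g y - a| := by
  have hvol0 : volume (ball c R) ≠ 0 := (measure_ball_pos _ _ hR).ne'
  have hvolt : volume (ball c R) ≠ ∞ := measure_ball_lt_top.ne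
  have hvr : (volume : Measure (E n)).real (ball c R) ≠ 0 :=
    (ENNReal.toReal_pos hvol0 hvolt).ne'
  have hconst : IntegrableOn (fun _ : E n => a) (ball c R) := integrableOn_const hvolt
  have hmean : (volume : Measure (E n)).real (ball c R) * (a - ⨍ z in ball c R, g z) =
      -∫ z in ball c R, (g z - a) := by
    rw [integral_sub hg hconst, setAverage_eq, setIntegral_const]
    simp only [smul_eq_mul]
    field_simp
    ring
  have h2 : volume (ball c R) * ENNReal.ofReal |a - ⨍ z in ball c R, g z| ≤
      ∫⁻ y in ball c R, ENNReal.ofReal |g y - a| := by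
    have h3 : volume (ball c R) * ENNReal.ofReal |a - ⨍ z in ball c R, g z| =
        ‖∫ z in ball c R, (g z - a)‖ₑ := by
      rw [← enorm_neg, ← hmean, enorm_mul, Real.enorm_eq_ofReal_abs, Real.enorm_eq_ofReal_abs,
        abs_of_nonneg measureReal_nonneg, ofReal_measureReal hvolt]
    rw [h3]
    refine (enorm_integral_le_lintegral_enorm _).trans (le_of_eq ?_)
    simp only [Real.enorm_eq_ofReal_abs]
  calc ∫⁻ y in ball c R, ENNReal.ofReal |g y - ⨍ z in ball c R, g z|
      ≤ ∫⁻ y in ball c R, (ENNReal.ofReal |g y - a| +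
          ENNReal.ofReal |a - ⨍ z in ball c R, g z|) := by
        refine lintegral_mono fun y => ?_
        rw [← ENNReal.ofReal_add (abs_nonneg _) (abs_nonneg _)]
        exact ENNReal.ofReal_le_ofReal (abs_sub_le _ _ _)
    _ = (∫⁻ y in ball c R, ENNReal.ofReal |g y - a|) +
          volume (ball c R) * ENNReal.ofReal |a - ⨍ z in ball c R, g z| := by
        rw [lintegral_add_right _ measurable_const, lintegral_const, Measure.restrict_apply_univ,
          mul_comm (volume _)]
    _ ≤ _ := by
        rw [two_mul]
        gcongr

/-- The unweighted estimate: on `B(c, R)` the function `T^m_{α,b} f` deviates from a suitable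
constant `a`, in `L¹`, by at most
`C Cb^m R^(n+δ) ∫ |f z| (R κ + |c - z|)^(-(n - αt + δ)) dz`. With `κ = |B(0,1)|^(1/n)` the integral
is the one which the class `H` controls. The constant `a` is the value at a base point
`x₀ ∈ B(c, R)` of the operator applied to the part of `f` outside `B(c, 5 R)`. -/
theorem exists_osc_bound {n m : ℕ} {α δ αt γ A₁ A₂ κ : ℝ} (hn : 1 ≤ n) (hα0 : 0 < α)
    (hαn : α < (n : ℝ)) (hγ0 : 0 < γ) (hδ0 : 0 < δ) (hδγ : δ < γ)
    (hmδ : (m : ℝ) * δ < (n : ℝ) - α) (hαt : αt = (m : ℝ) * δ + α)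
    (hA₁ : 0 ≤ A₁) (hA₂ : 0 ≤ A₂) (hκ : 0 < κ) {K : E n → ℝ} (hsize : SizeCond n α A₁ K)
    (hsmooth : SmoothCond n α γ A₂ K) :
    ∃ C : ℝ≥0, ∀ (b : E n → ℝ) (Cb : ℝ), 0 ≤ Cb → LipDelta δ Cb b →
      ∀ (f Tf : E n → ℝ), Measurable f →
        (∀ᵐ x ∂(volume : Measure (E n)),
          Integrable (fun z => (b x - b z) ^ m * K (x - z) * f z) volume ∧
            Tf x = ∫ z, (b x - b z) ^ m * K (x - z) * f z) →
        ∀ (c : E n) (R : ℝ), 0 < R → ∃ a : ℝ,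
          ∫⁻ y in ball c R, ENNReal.ofReal |Tf y - a| ≤
            (C : ℝ≥0∞) * ENNReal.ofReal Cb ^ m * ENNReal.ofReal (R ^ ((n : ℝ) + δ)) *
              ∫⁻ z, ENNReal.ofReal |f z| *
                ENNReal.ofReal ((R * κ + dist c z) ^ (-((n : ℝ) - αt + δ))) := by
  have hne : Nonempty (Fin n) := ⟨⟨0, hn⟩⟩
  have hαtpos : 0 < αt := by rw [hαt]; positivity
  obtain ⟨s, hs⟩ : ∃ s, s = (n : ℝ) - αt + δ := ⟨_, rfl⟩
  have hspos : 0 < s := by rw [hs, hαt]; linarith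
  rw [← hs]
  obtain ⟨V, hV⟩ : ∃ V, V = (volume : Measure (E n)).real (ball 0 1) := ⟨_, rfl⟩
  have hV0 : 0 ≤ V := hV ▸ measureReal_nonneg
  obtain ⟨Cf, hCf⟩ : ∃ Cf, Cf = (2 ^ δ) ^ m * A₂ * 2 ^ δ * 2 ^ ((n : ℝ) - α + γ) +
          A₁ * 2 ^ ((n : ℝ) - α) * 2 ^ δ * m * (2 ^ δ) ^ (m - 1) := ⟨_, rfl⟩
  have hCf0 : 0 ≤ Cf := by rw [hCf]; positivity
  refine ⟨(A₁ * ((n : ℝ) * V / αt * 6 ^ αt * (κ + 5) ^ s) + V * (Cf * (κ + 1) ^ s)).toNNReal,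
    fun b Cb hCb hb f Tf hf hT c R hR => ?_⟩
  have hvolB : volume (ball c R) = ENNReal.ofReal (R ^ n * V) := by
    rw [Measure.addHaar_ball _ _ hR.le, hV, ENNReal.ofReal_mul (by positivity),
      ofReal_measureReal measure_ball_lt_top.ne]
    simp
  have hT' : ∀ᵐ x ∂(volume.restrict (ball c R)), x ∈ ball c R ∧
      Integrable (fun z => (b x - b z) ^ m * K (x - z) * f z) volume ∧
            Tf x = ∫ z, (b x - b z) ^ m * K (x - z) * f z := by
    filter_upwards [ae_restrict_of_ae hT, ae_restrict_mem measurableSet_ball] with x h1 h2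
    exact ⟨h2, h1⟩
  obtain ⟨x₀, hx₀B, hx₀i, -⟩ : ∃ x₀, x₀ ∈ ball c R ∧
      Integrable (fun z => (b x₀ - b z) ^ m * K (x₀ - z) * f z) volume ∧
            Tf x₀ = ∫ z, (b x₀ - b z) ^ m * K (x₀ - z) * f z := by
    have : (ae (volume.restrict (ball c R))).NeBot := by
      rw [ae_neBot, Ne, Measure.restrict_eq_zero]
      exact (measure_ball_pos _ _ hR).ne'
    exact hT'.exists
  set J : ℝ≥0∞ := ∫⁻ z, ENNReal.ofReal |f z| * ENNReal.ofReal ((R * κ + dist c z) ^ (-s)) with hJ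
  set M : ℝ≥0∞ := ENNReal.ofReal Cb ^ m with hM
  have hMof : ENNReal.ofReal (Cb ^ m) = M := ENNReal.ofReal_pow hCb m
  have hfm : Measurable fun z => ENNReal.ofReal |f z| := hf.norm.ennreal_ofReal
  have hbase : ∀ z, 0 < R * κ + dist c z := fun z => by positivity
  have hnear : ∀ z ∈ ball c (5 * R), 1 ≤ ((κ + 5) * R) ^ s * (R * κ + dist c z) ^ (-s) := by
    intro z hz
    rw [mem_ball, dist_comm] at hz
    rw [Real.rpow_neg (hbase z).le, ← div_eq_mul_inv, one_le_div (by have := hbase z; positivity)]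
    have := hbase z
    gcongr
    linarith
  have hfar : ∀ z, 5 * R ≤ dist c z →
      dist c z ^ (-s) ≤ (κ + 1) ^ s * (R * κ + dist c z) ^ (-s) := by
    intro z hz
    have hD : 0 < dist c z := by linarith
    have h1 : R * κ + dist c z ≤ (κ + 1) * dist c z := by nlinarith
    calc dist c z ^ (-s) = (κ + 1) ^ s * ((κ + 1) * dist c z) ^ (-s) := by
          rw [Real.mul_rpow (by positivity) hD.le, ← mul_assoc, ← Real.rpow_add (by positivity)]
          simp
      _ ≤ _ := mul_le_mul_of_nonneg_left
          (Real.rpow_le_rpow_of_nonpos (hbase z) h1 (by linarith)) (by positivity)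
  have hmeas2 : Measurable fun p : E n × E n =>
      ENNReal.ofReal (‖p.1 - p.2‖ ^ (αt - (n : ℝ))) * ENNReal.ofReal |f p.2| :=
    (((measurable_fst.sub measurable_snd).norm.pow_const _).ennreal_ofReal).mul
      (hfm.comp measurable_snd)
  refine ⟨∫ z in (ball c (5 * R))ᶜ, (b x₀ - b z) ^ m * K (x₀ - z) * f z, ?_⟩
  -- `B(c, 5 R)` contributes through the size of the kernel, its complement through the smoothness
  have hpt : ∀ᵐ x ∂(volume.restrict (ball c R)),
      ENNReal.ofReal |Tf x - ∫ z in (ball c (5 * R))ᶜ, (b x₀ - b z) ^ m * K (x₀ - z) * f z| ≤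
        M * ENNReal.ofReal A₁ * (∫⁻ z in ball c (5 * R),
          ENNReal.ofReal (‖x - z‖ ^ (αt - (n : ℝ))) * ENNReal.ofReal |f z|) +
        M * ENNReal.ofReal (Cf * (κ + 1) ^ s * R ^ δ) * J := by
    filter_upwards [hT'] with x hx
    obtain ⟨hxB, hxi, hTx⟩ := hx
    have hsplit : Tf x - ∫ z in (ball c (5 * R))ᶜ, (b x₀ - b z) ^ m * K (x₀ - z) * f z =
        (∫ z in ball c (5 * R), (b x - b z) ^ m * K (x - z) * f z) +
        ∫ z in (ball c (5 * R))ᶜ, ((b x - b z) ^ m * K (x - z) * f z -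
          (b x₀ - b z) ^ m * K (x₀ - z) * f z) := by
      rw [hTx, ← integral_add_compl measurableSet_ball hxi,
        integral_sub hxi.integrableOn hx₀i.integrableOn]
      ring
    rw [hsplit, ← Real.enorm_eq_ofReal_abs]
    refine (enorm_add_le _ _).trans (add_le_add ?_ ?_)
    · refine (enorm_integral_le_lintegral_enorm _).trans ?_
      have hmx : Measurable fun z : E n =>
          ENNReal.ofReal (‖x - z‖ ^ (αt - (n : ℝ))) * ENNReal.ofReal |f z| := by
        fun_prop
      rw [← lintegral_const_mul _ hmx]
      refine lintegral_mono_ae ?_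
      have hae : ∀ᵐ z ∂(volume.restrict (ball c (5 * R))), z ≠ x :=
        ae_restrict_of_ae (by simp [ae_iff])
      filter_upwards [hae] with z hz
      have h1 := kernel_near_le hαt hsize hCb hb (Ne.symm hz)
      rw [enorm_mul, Real.enorm_eq_ofReal_abs, Real.enorm_eq_ofReal_abs]
      refine (mul_le_mul_left (ENNReal.ofReal_le_ofReal h1) _).trans (le_of_eq ?_)
      rw [ENNReal.ofReal_mul (by positivity), ENNReal.ofReal_mul (by positivity), hMof]
      ring
    · refine (enorm_integral_le_lintegral_enorm _).trans ?_
      rw [hJ, ← lintegral_const_mul _ (by fun_prop)]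
      refine le_trans ?_ (setLIntegral_le_lintegral (ball c (5 * R))ᶜ _)
      refine setLIntegral_mono' measurableSet_ball.compl fun z hz => ?_
      have hz' : 5 * R ≤ dist c z := by
        simpa [mem_ball, dist_comm] using hz
      have h1 := kernel_far_le hαn hγ0 hδ0 hδγ hαt hA₁ hA₂ hsize hsmooth hCb hb hR
        (mem_ball.1 hxB) (mem_ball.1 hx₀B) hz'
      rw [← hs, ← hCf] at h1
      have h2 : |(b x - b z) ^ m * K (x - z) - (b x₀ - b z) ^ m * K (x₀ - z)| ≤
          Cb ^ m * (Cf * (κ + 1) ^ s * R ^ δ) * (R * κ + dist c z) ^ (-s) := by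
        refine h1.trans ?_
        calc Cf * Cb ^ m * R ^ δ * dist c z ^ (-s)
            ≤ Cf * Cb ^ m * R ^ δ * ((κ + 1) ^ s * (R * κ + dist c z) ^ (-s)) := by
              gcongr
              exact hfar z hz'
          _ = _ := by ring
      rw [← sub_mul, enorm_mul, Real.enorm_eq_ofReal_abs, Real.enorm_eq_ofReal_abs]
      refine (mul_le_mul_left (ENNReal.ofReal_le_ofReal h2) _).trans (le_of_eq ?_)
      rw [ENNReal.ofReal_mul (by positivity), ENNReal.ofReal_mul (by positivity), hMof]
      ring
  have hTon : ∫⁻ x in ball c R, ∫⁻ z in ball c (5 * R),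
        ENNReal.ofReal (‖x - z‖ ^ (αt - (n : ℝ))) * ENNReal.ofReal |f z| ≤
      ENNReal.ofReal ((n : ℝ) * V / αt * 6 ^ αt * (κ + 5) ^ s) *
        ENNReal.ofReal (R ^ ((n : ℝ) + δ)) * J := by
    -- Tonelli: for fixed `z`, the ball `B(c, R)` lies in `B(z, 6 R)`
    rw [lintegral_lintegral_swap hmeas2.aemeasurable, hJ, ← lintegral_const_mul _ (by fun_prop)]
    refine le_trans ?_ (setLIntegral_le_lintegral (ball c (5 * R)) _)
    refine setLIntegral_mono' measurableSet_ball fun z hz => ?_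
    have hmz : Measurable fun x : E n => ENNReal.ofReal (‖x - z‖ ^ (αt - (n : ℝ))) := by fun_prop
    rw [lintegral_mul_const _ hmz]
    have hsub : ball c R ⊆ ball z (6 * R) := by
      apply ball_subset_ball'
      rw [mem_ball, dist_comm] at hz
      linarith
    have h1 := (lintegral_mono_set (μ := volume)
      (f := fun x : E n => ENNReal.ofReal (‖x - z‖ ^ (αt - (n : ℝ)))) hsub).trans
      (lintegral_ball_riesz n hn hαtpos z (by positivity : 0 < 6 * R))
    rw [← hV] at h1
    have h2 : (n : ℝ) * V / αt * (6 * R) ^ αt ≤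
        ((n : ℝ) * V / αt * 6 ^ αt * (κ + 5) ^ s) * R ^ ((n : ℝ) + δ) *
          (R * κ + dist c z) ^ (-s) := by
      calc (n : ℝ) * V / αt * (6 * R) ^ αt = (n : ℝ) * V / αt * (6 * R) ^ αt * 1 := by ring
        _ ≤ (n : ℝ) * V / αt * (6 * R) ^ αt *
            (((κ + 5) * R) ^ s * (R * κ + dist c z) ^ (-s)) := by
          gcongr
          exact hnear z hz
        _ = _ := by
          rw [Real.mul_rpow (by norm_num) hR.le, Real.mul_rpow (by positivity) hR.le,
            show (n : ℝ) + δ = αt + s by rw [hs]; ring, Real.rpow_add hR]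
          ring
    have hb' := hbase z
    calc (∫⁻ x in ball c R, ENNReal.ofReal (‖x - z‖ ^ (αt - (n : ℝ)))) * ENNReal.ofReal |f z|
        ≤ ENNReal.ofReal (((n : ℝ) * V / αt * 6 ^ αt * (κ + 5) ^ s) * R ^ ((n : ℝ) + δ) *
          (R * κ + dist c z) ^ (-s)) * ENNReal.ofReal |f z| := by
          gcongr
          exact h1.trans (ENNReal.ofReal_le_ofReal h2)
      _ = _ := by
          rw [ENNReal.ofReal_mul (by positivity), ENNReal.ofReal_mul (by positivity)]
          ring
  have hmeas3 : Measurable fun x : E n => ∫⁻ z in ball c (5 * R),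
      ENNReal.ofReal (‖x - z‖ ^ (αt - (n : ℝ))) * ENNReal.ofReal |f z| :=
    hmeas2.lintegral_prod_right'
  calc ∫⁻ x in ball c R,
        ENNReal.ofReal |Tf x - ∫ z in (ball c (5 * R))ᶜ, (b x₀ - b z) ^ m * K (x₀ - z) * f z|
      ≤ ∫⁻ x in ball c R, (M * ENNReal.ofReal A₁ * (∫⁻ z in ball c (5 * R),
          ENNReal.ofReal (‖x - z‖ ^ (αt - (n : ℝ))) * ENNReal.ofReal |f z|) +
        M * ENNReal.ofReal (Cf * (κ + 1) ^ s * R ^ δ) * J) := lintegral_mono_ae hpt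
    _ = M * ENNReal.ofReal A₁ * (∫⁻ x in ball c R, ∫⁻ z in ball c (5 * R),
          ENNReal.ofReal (‖x - z‖ ^ (αt - (n : ℝ))) * ENNReal.ofReal |f z|) +
        M * ENNReal.ofReal (Cf * (κ + 1) ^ s * R ^ δ) * J * ENNReal.ofReal (R ^ n * V) := by
        rw [lintegral_add_right _ measurable_const, lintegral_const_mul _ hmeas3,
          lintegral_const, Measure.restrict_apply_univ, hvolB]
    _ ≤ M * ENNReal.ofReal A₁ * (ENNReal.ofReal ((n : ℝ) * V / αt * 6 ^ αt * (κ + 5) ^ s) *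
        ENNReal.ofReal (R ^ ((n : ℝ) + δ)) * J) +
        M * ENNReal.ofReal (Cf * (κ + 1) ^ s * R ^ δ) * J * ENNReal.ofReal (R ^ n * V) := by
        gcongr
    _ = _ := by
        have hRn : R ^ ((n : ℝ) + δ) = R ^ n * R ^ δ := by
          rw [Real.rpow_add hR, Real.rpow_natCast]
        change _ = ENNReal.ofReal _ * M * _ * J
        rw [ENNReal.ofReal_add (by positivity) (by positivity), ENNReal.ofReal_mul hA₁,
          ENNReal.ofReal_mul hV0, hRn, ENNReal.ofReal_mul (p := R ^ n) (by positivity),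
          ENNReal.ofReal_mul (p := R ^ n) (by positivity),
          ENNReal.ofReal_mul (p := Cf * (κ + 1) ^ s) (by positivity)]
        ring

/-! ### The weighted estimate -/

/-- one-weight boundedness `L^r(w) → 𝕃_w(δ̃/n)`, `δ̃ = α̃ − n/r`, for
higher order commutators of fractional integral operators with kernels satisfying
`S*_α` and `H*_{α,∞}`, `0 < α < n`, for weights `w` with `(w,w) ∈ H(r, α̃, δ̃)`. -/
theorem statement16 (n m : ℕ) (α δ δt αt γ A₁ A₂ : ℝ) (r r' : ℝ≥0∞)
    (hn : 1 ≤ n) (hα0 : 0 < α) (hαn : α < (n : ℝ))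
    (hγ0 : 0 < γ) (hγ1 : γ ≤ 1) (hδ0 : 0 < δ) (hδγ : δ < γ)
    (hmδ : (m : ℝ) * δ < (n : ℝ) - α) (hαt : αt = (m : ℝ) * δ + α)
    (hr : 1 ≤ r) (hconj : r⁻¹ + r'⁻¹ = 1)
    (hδteq : δt = αt - (n : ℝ) * r⁻¹.toReal) (hδt1 : δt ≤ δ)
    (K : E n → ℝ) (hKm : Measurable K) (hA₁ : 0 ≤ A₁) (hA₂ : 0 ≤ A₂)
    (hsize : SizeCond n α A₁ K) (hsmooth : SmoothCond n α γ A₂ K)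
    (w : E n → ℝ≥0∞) (hwm : Measurable w)
    (Cw : ℝ≥0) (hH : Hclass n r' αt δ δt w w (Cw : ℝ≥0∞)) :
    ∃ C : ℝ≥0,
      ∀ (b : E n → ℝ) (Cb : ℝ), Measurable b → 0 ≤ Cb → LipDelta δ Cb b →
      ∀ (f Tf : E n → ℝ), Measurable f →
        eN r (fun z => ENNReal.ofReal |f z| * (w z)⁻¹) volume < ∞ →
        (∀ᵐ x ∂(volume : Measure (E n)),
          Integrable (fun z => (b x - b z) ^ m * K (x - z) * f z) volume ∧
            Tf x = ∫ z, (b x - b z) ^ m * K (x - z) * f z) →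
        LocallyIntegrable Tf volume →
        ∀ (c : E n) (R : ℝ), 0 < R →
          essSup (fun y => (w y)⁻¹) (volume.restrict (ball c R)) *
              volume (ball c R) ^ (-(1 + δt / (n : ℝ))) *
              (∫⁻ y in ball c R, ENNReal.ofReal |Tf y - (⨍ z in ball c R, Tf z)|) ≤
            (C : ℝ≥0∞) * (ENNReal.ofReal Cb) ^ m *
              eN r (fun z => ENNReal.ofReal |f z| * (w z)⁻¹) volume := by

  have hne : Nonempty (Fin n) := ⟨⟨0, hn⟩⟩
  have hn0 : (0 : ℝ) < n := by exact_mod_cast hn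
  obtain ⟨V, hV⟩ : ∃ V, V = (volume : Measure (E n)).real (ball 0 1) := ⟨_, rfl⟩
  have hVpos : 0 < V :=
    hV ▸ ENNReal.toReal_pos (measure_ball_pos _ _ one_pos).ne' measure_ball_lt_top.ne
  have hκ : 0 < V ^ ((1 : ℝ) / n) := by positivity
  have hr' : 1 ≤ r' := by
    rw [← ENNReal.inv_le_one, ← hconj]
    exact le_add_self
  obtain ⟨C, hC⟩ := exists_osc_bound hn hα0 hαn hγ0 hδ0 hδγ hmδ hαt hA₁ hA₂ hκ hsize hsmooth
  refine ⟨2 * C * (V ^ (-(1 + δ / n))).toNNReal * Cw,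
    fun b Cb _ hCb hb f Tf hf hfin hT hloc c R hR => ?_⟩
  obtain ⟨a, ha⟩ := hC b Cb hCb hb f Tf hf hT c R hR
  have hHB := hH c R hR
  have hvolB : volume (ball c R) = ENNReal.ofReal (R ^ n * V) := by
    rw [Measure.addHaar_ball _ _ hR.le, hV, ENNReal.ofReal_mul (by positivity),
      ofReal_measureReal measure_ball_lt_top.ne]
    simp
  have hvol0 : volume (ball c R) ≠ 0 := (measure_ball_pos _ _ hR).ne'
  have hvolt : volume (ball c R) ≠ ∞ := measure_ball_lt_top.ne
  have hroot : volume (ball c R) ^ ((1 : ℝ) / n) = ENNReal.ofReal (R * V ^ ((1 : ℝ) / n)) := by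
    rw [hvolB, ENNReal.ofReal_rpow_of_pos (by positivity), Real.mul_rpow (by positivity) hVpos.le,
      ← Real.rpow_natCast, ← Real.rpow_mul hR.le, mul_one_div_cancel hn0.ne', Real.rpow_one]
  have hRpow : ENNReal.ofReal (R ^ ((n : ℝ) + δ)) =
      ENNReal.ofReal (V ^ (-(1 + δ / n))) * volume (ball c R) ^ (1 + δ / n) := by
    rw [hvolB, ENNReal.ofReal_rpow_of_pos (by positivity), ← ENNReal.ofReal_mul (by positivity),
      Real.mul_rpow (by positivity) hVpos.le, ← Real.rpow_natCast, ← Real.rpow_mul hR.le,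
      mul_left_comm, ← Real.rpow_add hVpos]
    congr 1
    rw [neg_add_cancel, Real.rpow_zero, mul_one]
    congr 1
    field_simp
  have hint : IntegrableOn Tf (ball c R) :=
    (hloc.integrableOn_isCompact (isCompact_closedBall c R)).mono_set ball_subset_closedBall
  set S := essSup (fun y => (w y)⁻¹) (volume.restrict (ball c R)) with hS
  set Φ : E n → ℝ≥0∞ := fun y => (volume (ball c R) ^ ((1 : ℝ) / (n : ℝ)) +
            ENNReal.ofReal (dist c y)) ^ (-((n : ℝ) - αt + δ)) with hΦ
  set N := eN r (fun z => ENNReal.ofReal |f z| * (w z)⁻¹) volume with hN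
  have hΦof : ∀ z, ENNReal.ofReal ((R * V ^ ((1 : ℝ) / n) + dist c z) ^ (-((n : ℝ) - αt + δ))) =
      Φ z := by
    intro z
    simp only [hΦ, hroot]
    rw [← ENNReal.ofReal_add (by positivity) (by positivity),
      ENNReal.ofReal_rpow_of_pos (by positivity)]
  have hΦm : Measurable Φ := by
    simp only [hΦ]
    fun_prop
  have hΦ0 : ∀ z, Φ z ≠ 0 := by
    intro z
    rw [← hΦof z]
    simp only [ne_eq, ENNReal.ofReal_eq_zero, not_le]
    positivity
  simp only [hΦof] at ha
  rcases eq_or_ne S 0 with hS0 | hS0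
  · rw [hS0]; simp
  have hvp0 : ∀ e : ℝ, volume (ball c R) ^ e ≠ 0 := fun e =>
    (ENNReal.rpow_pos (pos_iff_ne_zero.2 hvol0) hvolt).ne'
  have hwΦfin : eN r' (fun y => w y * Φ y) volume < ∞ := by
    -- This excludes `w = ∞` on a set of positive measure, where `|f| * w⁻¹` loses all
    -- information about `f`.
    rw [lt_top_iff_ne_top]
    intro htop
    rw [htop, ENNReal.mul_top (mul_ne_zero hS0 (hvp0 _)), top_le_iff] at hHB
    exact ENNReal.coe_ne_top hHB
  have hJ : ∫⁻ z, ENNReal.ofReal |f z| * Φ z ≤ N * eN r' (fun y => w y * Φ y) volume := by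
    have hm1 : Measurable fun z => ENNReal.ofReal |f z| * (w z)⁻¹ :=
      hf.norm.ennreal_ofReal.mul hwm.inv
    have hm2 : Measurable fun z => w z * Φ z := hwm.mul hΦm
    -- `|f| = (|f| w⁻¹) w` almost everywhere: `f` vanishes where `w = 0` because `|f| w⁻¹ < ∞`
    refine le_trans (lintegral_mono_ae ?_) (eN_holder hr hconj hm1 hm2)
    filter_upwards [ae_lt_top_of_eN hr hm1 hfin, ae_lt_top_of_eN hr' hm2 hwΦfin] with z h1 h2
    have hwt : w z ≠ ∞ := by
      intro h
      rw [h, ENNReal.top_mul (hΦ0 z)] at h2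
      exact lt_irrefl _ h2
    rcases eq_or_ne (w z) 0 with hw0 | hw0
    · have hf0 : ENNReal.ofReal |f z| = 0 := by
        by_contra hc
        rw [hw0, ENNReal.inv_zero, ENNReal.mul_top hc] at h1
        exact lt_irrefl _ h1
      rw [hf0]; simp
    · rw [mul_assoc, ← mul_assoc (w z)⁻¹, ENNReal.inv_mul_cancel hw0 hwt, one_mul]
  have hvexp : volume (ball c R) ^ (-(1 + δt / (n : ℝ))) * volume (ball c R) ^ (1 + δ / n) =
      volume (ball c R) ^ ((δ - δt) / (n : ℝ)) := by
    rw [← ENNReal.rpow_add _ _ hvol0 hvolt]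
    congr 1; ring
  calc S * volume (ball c R) ^ (-(1 + δt / (n : ℝ))) *
        (∫⁻ y in ball c R, ENNReal.ofReal |Tf y - (⨍ z in ball c R, Tf z)|)
      ≤ S * volume (ball c R) ^ (-(1 + δt / (n : ℝ))) *
        (2 * ((C : ℝ≥0∞) * ENNReal.ofReal Cb ^ m * ENNReal.ofReal (R ^ ((n : ℝ) + δ)) *
          (N * eN r' (fun y => w y * Φ y) volume))) := by
        gcongr
        refine (lintegral_sub_average_le hR hint a).trans ?_
        gcongr
        refine ha.trans ?_
        gcongr
    _ = 2 * C * ENNReal.ofReal (V ^ (-(1 + δ / n))) *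
          (S * volume (ball c R) ^ ((δ - δt) / (n : ℝ)) * eN r' (fun y => w y * Φ y) volume) *
          ENNReal.ofReal Cb ^ m * N := by
        rw [hRpow, ← hvexp]
        ring
    _ ≤ 2 * C * ENNReal.ofReal (V ^ (-(1 + δ / n))) * Cw * ENNReal.ofReal Cb ^ m * N := by
        gcongr
    _ = _ := by
        push_cast
        rfl
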